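/- arXiv:2306.14075 — 2 statements merged into one kernel-verified Lean document; each statement's English description precedes it below -/
import Mathlib

section
/- Let Q(X) = ⋀_{j∈[m]} R_j(Y_j) be a full conjunctive query. For i ∈ [s] let U_i, V_i ⊆ X, let w_i ≥ 0 be reals, let p_i ∈ (0, ∞], and assume each conditional (V_i|U_i) is guarded by some atom R_{j_i} of Q, i.e. U_i ∪ V_i ⊆ Y_{j_i}. Suppose the information inequality ∑_{i∈[s]} w_i·((1/p_i)·h(U_i) + h(V_i|U_i)) ≥ h(X) (with 1/∞ = 0) holds for every entropic vector h on the variables X. Then for every database instance D = (R_1^D, …, R_m^D) of finite relations, the output size satisfies |Q(D)| ≤ ∏_{i∈[s]} ||deg_{R_{j_i}^D}(V_i|U_i)||_{p_i}^{w_i}. -/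
/-!
Let `T` be the output and let the random tuple be uniform on `T`, so that `h(X) = log |T|`. For any
distribution supported on a relation, a conditional `(V|U)` satisfies
`(1/p) h(U) + h(V|U) ≤ log ‖deg(V|U)‖_p`. Indeed, given `U = u` there are only `d_u` values of `V`,
so `h(V|U) ≤ E[log d_u]`, and Gibbs' inequality with the weights `d_u ^ p` gives
`h(U) + p E[log d_u] ≤ log ∑ u, d_u ^ p`. Weighting by `w i` and summing bounds `log |T|`.
-/

open scoped BigOperators ENNReal

namespace JoinBounds

noncomputable section

variable {A α : Type*}

/-- The projection of a tuple `t : A → α` onto the attribute set `U`, represented as a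
partial tuple. -/
def proj [DecidableEq A] (U : Finset A) (t : A → α) : A → Option α :=
  fun x => if x ∈ U then some (t x) else none

/-- The projection of a relation `R` onto the attribute set `U`. -/
def projR [Fintype A] [DecidableEq A] [DecidableEq α] (U : Finset A) (R : Finset (A → α)) :
    Finset (A → Option α) :=
  R.image (proj U)

/-- The degree of a `U`-tuple `u` in `R`: the number of distinct `V`-tuples
appearing in `R` together with `u`. -/
def deg [Fintype A] [DecidableEq A] [DecidableEq α] (U V : Finset A) (R : Finset (A → α))
    (u : A → Option α) : ℕ :=
  (projR V (R.filter fun t => proj U t = u)).card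

/-- The `ℓ_p`-norm of the degree sequence `deg_R(V|U)`, for `p ∈ (0, ∞]`. -/
def lpNorm [Fintype A] [DecidableEq A] [DecidableEq α] (U V : Finset A) (R : Finset (A → α))
    (p : ℝ≥0∞) : ℝ :=
  if p = ⊤ then (((projR U R).sup fun u => deg U V R u : ℕ) : ℝ)
  else (∑ u ∈ projR U R, (deg U V R u : ℝ) ^ p.toReal) ^ (1 / p.toReal)

/-- The marginal probability, on the attribute set `W`, of the partial tuple `w`, under a
probability distribution `P` on the tuples of `R`. -/
def marg [Fintype A] [DecidableEq A] [DecidableEq α] (P : (A → α) → ℝ) (R : Finset (A → α))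
    (W : Finset A) (w : A → Option α) : ℝ :=
  ∑ t ∈ R.filter fun t => proj W t = w, P t

/-- The (base-2 Shannon) entropy of the marginal on the attribute set `W` of the
distribution `P` on the tuples of `R`: this is the entropic vector `h(W)`. -/
def entropy [Fintype A] [DecidableEq A] [DecidableEq α] (P : (A → α) → ℝ) (R : Finset (A → α))
    (W : Finset A) : ℝ :=
  -∑ w ∈ projR W R, marg P R W w * Real.logb 2 (marg P R W w)

end

end JoinBounds

namespace JoinBounds

theorem sum_mul_logb_le_logb {ι : Type*} {s : Finset ι} {b : ℝ} {p x : ι → ℝ} (hb : 1 < b)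
    (hp : ∀ i ∈ s, 0 ≤ p i) (hp1 : ∑ i ∈ s, p i = 1)
    (hx : ∀ i ∈ s, 0 < p i → 0 < x i) {S : ℝ} (hS : ∑ i ∈ s, p i * x i ≤ S) :
    ∑ i ∈ s, p i * Real.logb b (x i) ≤ Real.logb b S := by
  classical
  let s' : Finset ι := {i ∈ s | p i ≠ 0}
  have restrict (f : ι → ℝ) : ∑ i ∈ s', p i * f i = ∑ i ∈ s, p i * f i :=
    Finset.sum_filter_of_ne fun i _ => left_ne_zero_of_mul
  have p_pos : ∀ i ∈ s', 0 < p i := fun i hi =>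
    (hp i (Finset.mem_of_mem_filter i hi)).lt_of_ne' (Finset.mem_filter.mp hi).2
  have x_pos : ∀ i ∈ s', 0 < x i := fun i hi =>
    hx i (Finset.mem_of_mem_filter i hi) (p_pos i hi)
  have p_sum : ∑ i ∈ s', p i = 1 := (Finset.sum_filter_ne_zero s).trans hp1
  have jensen : ∑ i ∈ s', p i * Real.log (x i) ≤ Real.log (∑ i ∈ s', p i * x i) :=
    strictConcaveOn_log_Ioi.concaveOn.le_map_sum (fun i hi => (p_pos i hi).le) p_sum x_pos
  have sum_pos : 0 < ∑ i ∈ s', p i * x i :=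
    Finset.sum_pos (fun i hi => mul_pos (p_pos i hi) (x_pos i hi)) <|
      Finset.nonempty_of_sum_ne_zero (p_sum ▸ one_ne_zero)
  simp only [restrict] at jensen sum_pos
  simp only [Real.logb, ← mul_div_assoc, ← Finset.sum_div]
  exact div_le_div_of_nonneg_right (jensen.trans (Real.log_le_log sum_pos hS))
    (Real.log_pos hb).le

section Projection

variable {A α : Type*} [DecidableEq A] {U V W Y : Finset A} {t t' : A → α}

theorem proj_eq_proj_iff : proj W t = proj W t' ↔ ∀ x ∈ W, t x = t' x := by
  refine funext_iff.trans (forall_congr' fun x => ?_)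
  by_cases hx : x ∈ W <;> simp [proj, hx]

theorem proj_union_eq_proj_union_iff :
    proj (U ∪ V) t = proj (U ∪ V) t' ↔ proj U t = proj U t' ∧ proj V t = proj V t' := by
  simp only [proj_eq_proj_iff, Finset.mem_union, or_imp, forall_and]

theorem proj_univ_injective [Fintype A] :
    Function.Injective (proj Finset.univ : (A → α) → A → Option α) :=
  fun _ _ h => funext fun x => proj_eq_proj_iff.1 h x (Finset.mem_univ x)

variable [Fintype A] [DecidableEq α] {Q R : Finset (A → α)}

theorem proj_mem_projR (ht : t ∈ R) : proj W t ∈ projR W R :=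
  Finset.mem_image_of_mem _ ht

theorem projR_subset_projR_iff :
    projR W Q ⊆ projR W R ↔ ∀ t ∈ Q, ∃ t' ∈ R, ∀ x ∈ W, t x = t' x := by
  simp only [projR, Finset.image_subset_iff, Finset.mem_image, ← proj_eq_proj_iff, eq_comm]

theorem projR_subset_projR_of_subset (hWY : W ⊆ Y) (h : projR Y Q ⊆ projR Y R) :
    projR W Q ⊆ projR W R :=
  projR_subset_projR_iff.2 fun t ht =>
    let ⟨t', ht', htt'⟩ := projR_subset_projR_iff.1 h t ht
    ⟨t', ht', fun x hx => htt' x (hWY hx)⟩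

end Projection

section DegreeNorm

variable {A α : Type*} [Fintype A] [DecidableEq A] [DecidableEq α] {U V : Finset A}
  {Q R : Finset (A → α)} {u : A → Option α} {p : ℝ≥0∞}

theorem deg_pos (hu : u ∈ projR U R) : 0 < deg U V R u := by
  obtain ⟨t, ht, rfl⟩ := Finset.mem_image.mp hu
  exact Finset.card_pos.mpr ⟨proj V t, proj_mem_projR (Finset.mem_filter.mpr ⟨ht, rfl⟩)⟩

theorem deg_mono (h : projR (U ∪ V) Q ⊆ projR (U ∪ V) R) (u : A → Option α) :
    deg U V Q u ≤ deg U V R u := by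
  refine Finset.card_le_card (Finset.image_subset_iff.mpr fun t ht => ?_)
  obtain ⟨htQ, rfl⟩ := Finset.mem_filter.mp ht
  obtain ⟨t', ht', htt'⟩ := Finset.mem_image.mp (h (proj_mem_projR htQ))
  obtain ⟨hU, hV⟩ := proj_union_eq_proj_union_iff.1 htt'
  exact hV ▸ proj_mem_projR (Finset.mem_filter.mpr ⟨ht', hU⟩)

theorem lpNorm_top : lpNorm U V R ⊤ = ((projR U R).sup (deg U V R) : ℕ) :=
  if_pos rfl

theorem lpNorm_of_ne_top (hp : p ≠ ⊤) :
    lpNorm U V R p = (∑ u ∈ projR U R, (deg U V R u : ℝ) ^ p.toReal) ^ (1 / p.toReal) :=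
  if_neg hp

theorem sum_deg_rpow_pos (hR : R.Nonempty) (r : ℝ) :
    0 < ∑ u ∈ projR U R, (deg U V R u : ℝ) ^ r :=
  Finset.sum_pos (fun _ hu => Real.rpow_pos_of_pos (Nat.cast_pos.mpr (deg_pos hu)) r)
    (hR.image _)

theorem lpNorm_nonneg : 0 ≤ lpNorm U V R p := by
  unfold lpNorm
  split_ifs <;> positivity

theorem lpNorm_pos (hR : R.Nonempty) : 0 < lpNorm U V R p := by
  by_cases hp : p = ⊤
  · obtain ⟨t, ht⟩ := hR
    have hu : proj U t ∈ projR U R := proj_mem_projR ht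
    rw [hp, lpNorm_top, Nat.cast_pos]
    exact (deg_pos hu).trans_le (Finset.le_sup hu)
  · rw [lpNorm_of_ne_top hp]
    exact Real.rpow_pos_of_pos (sum_deg_rpow_pos hR _) _

theorem lpNorm_mono (h : projR (U ∪ V) Q ⊆ projR (U ∪ V) R) :
    lpNorm U V Q p ≤ lpNorm U V R p := by
  have hU : projR U Q ⊆ projR U R := projR_subset_projR_of_subset Finset.subset_union_left h
  by_cases hp : p = ⊤
  · simp only [hp, lpNorm_top, Nat.cast_le]
    exact Finset.sup_mono_fun (fun u _ => deg_mono h u) |>.trans (Finset.sup_mono hU)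
  · rw [lpNorm_of_ne_top hp, lpNorm_of_ne_top hp]
    gcongr ?_ ^ _
    calc ∑ u ∈ projR U Q, (deg U V Q u : ℝ) ^ p.toReal
        ≤ ∑ u ∈ projR U Q, (deg U V R u : ℝ) ^ p.toReal := by
          gcongr with u
          exact deg_mono h u
      _ ≤ ∑ u ∈ projR U R, (deg U V R u : ℝ) ^ p.toReal :=
          Finset.sum_le_sum_of_subset_of_nonneg hU fun _ _ _ => by positivity

end DegreeNorm

section Relabelling

theorem exists_map_arrowCongrRight_eq {A α : Type*} [Finite A] (T : Finset (A → α)) :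
    ∃ (n : ℕ) (f : Fin n ↪ α) (S : Finset (A → Fin n)), S.map f.arrowCongrRight = T := by
  classical
  have := Fintype.ofFinite A
  let F : Finset α := T.biUnion fun t => Finset.univ.image t
  have mem_F {t : A → α} (ht : t ∈ T) (x : A) : t x ∈ F :=
    Finset.mem_biUnion.mpr ⟨t, ht, Finset.mem_image_of_mem t (Finset.mem_univ x)⟩
  let f : Fin F.card ↪ α := F.equivFin.symm.toEmbedding.trans (Function.Embedding.subtype _)
  have hT : T ⊆ Finset.univ.map f.arrowCongrRight := fun t ht =>
    Finset.mem_map.mpr ⟨fun x => F.equivFin ⟨t x, mem_F ht x⟩, Finset.mem_univ _, by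
      ext x
      simp [f]⟩
  obtain ⟨S, -, hS⟩ := Finset.subset_map_iff.mp hT
  exact ⟨F.card, f, S, hS.symm⟩

variable {A α β : Type*} [DecidableEq A]

theorem proj_arrowCongrRight (f : α ↪ β) (W : Finset A) (t : A → α) :
    proj W (f.arrowCongrRight t) = f.optionMap.arrowCongrRight (proj W t) := by
  ext1 x
  by_cases hx : x ∈ W <;> simp [proj, hx]

variable [Fintype A] [DecidableEq α] [DecidableEq β] (f : α ↪ β) (U V : Finset A)
  (R : Finset (A → α))

theorem projR_map :
    projR U (R.map f.arrowCongrRight) = (projR U R).map f.optionMap.arrowCongrRight := by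
  simp only [projR, Finset.map_eq_image, Finset.image_image, Function.comp_def,
    proj_arrowCongrRight]

theorem deg_map (u : A → Option α) :
    deg U V (R.map f.arrowCongrRight) (f.optionMap.arrowCongrRight u) = deg U V R u := by
  simp only [deg, Finset.filter_map, Function.comp_def, proj_arrowCongrRight,
    EmbeddingLike.apply_eq_iff_eq, projR_map, Finset.card_map]

theorem lpNorm_map (p : ℝ≥0∞) : lpNorm U V (R.map f.arrowCongrRight) p = lpNorm U V R p := by
  simp only [lpNorm, projR_map, Finset.sup_map, Finset.sum_map, Function.comp_def, deg_map]

end Relabelling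

section Entropy

variable {A α : Type*} [Fintype A] [DecidableEq A] [DecidableEq α] {P : (A → α) → ℝ}
  {Q R : Finset (A → α)} {U V W : Finset A} {t : A → α}

theorem sum_mul_comp_proj (F : (A → Option α) → ℝ) :
    ∑ t ∈ R, P t * F (proj W t) = ∑ w ∈ projR W R, marg P R W w * F w := by
  rw [← Finset.sum_fiberwise_of_maps_to fun t ht => proj_mem_projR (W := W) ht]
  refine Finset.sum_congr rfl fun w _ => ?_
  rw [marg, Finset.sum_mul]
  exact Finset.sum_congr rfl fun t ht => by rw [(Finset.mem_filter.mp ht).2]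

theorem sum_marg : ∑ w ∈ projR W R, marg P R W w = ∑ t ∈ R, P t := by
  simpa using (sum_mul_comp_proj (P := P) (R := R) (W := W) fun _ => 1).symm

theorem entropy_eq_neg_sum :
    entropy P R W = -∑ t ∈ R, P t * Real.logb 2 (marg P R W (proj W t)) := by
  rw [entropy, sum_mul_comp_proj fun w => Real.logb 2 (marg P R W w)]

theorem marg_nonneg (hP : ∀ t ∈ R, 0 ≤ P t) (w : A → Option α) : 0 ≤ marg P R W w :=
  Finset.sum_nonneg fun t ht => hP t (Finset.mem_of_mem_filter t ht)

theorem marg_proj_pos (hP : ∀ t ∈ R, 0 ≤ P t) (ht : t ∈ R) (hPt : 0 < P t) :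
    0 < marg P R W (proj W t) :=
  Finset.sum_pos' (fun t' ht' => hP t' (Finset.mem_of_mem_filter t' ht'))
    ⟨t, Finset.mem_filter.mpr ⟨ht, rfl⟩, hPt⟩

theorem marg_univ_proj (ht : t ∈ R) : marg P R Finset.univ (proj Finset.univ t) = P t := by
  simp only [marg, proj_univ_injective.eq_iff, Finset.filter_eq', if_pos ht,
    Finset.sum_singleton]

theorem marg_union_proj :
    marg P R (U ∪ V) (proj (U ∪ V) t) = marg P {t' ∈ R | proj U t' = proj U t} V (proj V t) := by
  simp only [marg, Finset.filter_filter, proj_union_eq_proj_union_iff]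

theorem entropy_univ :
    entropy P R Finset.univ = -∑ t ∈ R, P t * Real.logb 2 (P t) := by
  rw [entropy_eq_neg_sum]
  exact congrArg _ (Finset.sum_congr rfl fun t ht => by rw [marg_univ_proj ht])

theorem entropy_eq_of_subset (hQR : Q ⊆ R) (hP : ∀ t ∈ R, t ∉ Q → P t = 0) (W : Finset A) :
    entropy P R W = entropy P Q W := by
  have hmarg (w : A → Option α) : marg P R W w = marg P Q W w :=
    (Finset.sum_subset (Finset.filter_subset_filter _ hQR) fun t htR htQ => by
      obtain ⟨htR, htw⟩ := Finset.mem_filter.mp htR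
      exact hP t htR fun ht => htQ (Finset.mem_filter.mpr ⟨ht, htw⟩)).symm
  simp only [entropy_eq_neg_sum, hmarg]
  rw [Finset.sum_subset hQR fun t htR htQ => by rw [hP t htR htQ, zero_mul]]

theorem sum_mul_div_marg_le {g : (A → Option α) → ℝ} (hg : ∀ w ∈ projR W R, 0 ≤ g w) :
    ∑ t ∈ R, P t * (g (proj W t) / marg P R W (proj W t)) ≤ ∑ w ∈ projR W R, g w := by
  rw [sum_mul_comp_proj fun w => g w / marg P R W w]
  refine Finset.sum_le_sum fun w hw => ?_
  rw [mul_div_left_comm]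
  exact mul_le_of_le_one_right (hg w hw) (div_self_le_one _)

theorem entropy_add_sum_mul_logb_le (hP : ∀ t ∈ R, 0 ≤ P t) (hP1 : ∑ t ∈ R, P t = 1)
    {g : (A → Option α) → ℝ} (hg : ∀ w ∈ projR W R, 0 < g w) :
    entropy P R W + ∑ t ∈ R, P t * Real.logb 2 (g (proj W t)) ≤
      Real.logb 2 (∑ w ∈ projR W R, g w) := by
  have log_ratio : ∀ t ∈ R, P t * Real.logb 2 (g (proj W t) / marg P R W (proj W t)) =
      P t * Real.logb 2 (g (proj W t)) - P t * Real.logb 2 (marg P R W (proj W t)) := by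
    intro t ht
    rcases (hP t ht).eq_or_lt with hPt | hPt
    · simp only [← hPt, zero_mul, sub_zero]
    · rw [Real.logb_div (hg _ (proj_mem_projR ht)).ne' (marg_proj_pos hP ht hPt).ne', mul_sub]
  have jensen := sum_mul_logb_le_logb one_lt_two hP hP1
    (fun t ht hPt => div_pos (hg _ (proj_mem_projR ht)) (marg_proj_pos hP ht hPt))
    (sum_mul_div_marg_le fun w hw => (hg w hw).le)
  rw [Finset.sum_congr rfl log_ratio, Finset.sum_sub_distrib] at jensen
  rw [entropy_eq_neg_sum]
  linarith

-- Reference weights for `h(V|U)`: the mass of `U = u` is spread evenly over its `d_u` extensions.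
theorem sum_mul_marg_div_le (hP : ∀ t ∈ R, 0 ≤ P t) :
    ∑ t ∈ R, P t * (marg P R U (proj U t) / deg U V R (proj U t) /
      marg P R (U ∪ V) (proj (U ∪ V) t)) ≤ ∑ t ∈ R, P t := by
  rw [← Finset.sum_fiberwise_of_maps_to fun t ht => proj_mem_projR (W := U) ht,
    ← sum_marg (P := P) (R := R) (W := U)]
  refine Finset.sum_le_sum fun u hu => ?_
  let Ru : Finset (A → α) := {t ∈ R | proj U t = u}
  have hd : (deg U V R u : ℝ) ≠ 0 := Nat.cast_ne_zero.mpr (deg_pos hu).ne'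
  calc ∑ t ∈ Ru, P t * (marg P R U (proj U t) / deg U V R (proj U t) /
          marg P R (U ∪ V) (proj (U ∪ V) t))
      = ∑ t ∈ Ru, P t * (marg P R U u / deg U V R u / marg P Ru V (proj V t)) :=
        Finset.sum_congr rfl fun t ht => by
          rw [marg_union_proj, (Finset.mem_filter.mp ht).2]
    _ ≤ ∑ _v ∈ projR V Ru, marg P R U u / deg U V R u :=
        sum_mul_div_marg_le (g := fun _ => marg P R U u / deg U V R u) fun _ _ =>
          div_nonneg (marg_nonneg hP u) (Nat.cast_nonneg _)
    _ = deg U V R u * (marg P R U u / deg U V R u) := by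
        rw [Finset.sum_const, nsmul_eq_mul, deg]
    _ = marg P R U u := mul_div_cancel₀ _ hd

theorem entropy_union_sub_entropy_le (hP : ∀ t ∈ R, 0 ≤ P t) (hP1 : ∑ t ∈ R, P t = 1) :
    entropy P R (U ∪ V) - entropy P R U ≤
      ∑ t ∈ R, P t * Real.logb 2 (deg U V R (proj U t)) := by
  have d_pos : ∀ t ∈ R, (0 : ℝ) < deg U V R (proj U t) := fun t ht =>
    Nat.cast_pos.mpr (deg_pos (proj_mem_projR ht))
  have log_ratio : ∀ t ∈ R, P t * Real.logb 2 (marg P R U (proj U t) / deg U V R (proj U t) /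
        marg P R (U ∪ V) (proj (U ∪ V) t)) =
      P t * Real.logb 2 (marg P R U (proj U t)) - P t * Real.logb 2 (deg U V R (proj U t)) -
        P t * Real.logb 2 (marg P R (U ∪ V) (proj (U ∪ V) t)) := by
    intro t ht
    rcases (hP t ht).eq_or_lt with hPt | hPt
    · simp only [← hPt, zero_mul, sub_zero]
    · have hU := marg_proj_pos (W := U) hP ht hPt
      rw [Real.logb_div (div_pos hU (d_pos t ht)).ne' (marg_proj_pos hP ht hPt).ne',
        Real.logb_div hU.ne' (d_pos t ht).ne', mul_sub, mul_sub]
  have jensen := sum_mul_logb_le_logb one_lt_two hP hP1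
    (fun t ht hPt => div_pos (div_pos (marg_proj_pos hP ht hPt) (d_pos t ht))
      (marg_proj_pos hP ht hPt))
    ((sum_mul_marg_div_le (U := U) (V := V) hP).trans_eq hP1)
  rw [Finset.sum_congr rfl log_ratio, Finset.sum_sub_distrib, Finset.sum_sub_distrib,
    Real.logb_one] at jensen
  rw [entropy_eq_neg_sum, entropy_eq_neg_sum]
  linarith

theorem sum_mul_logb_deg_le_logb_lpNorm_top (hP : ∀ t ∈ R, 0 ≤ P t) (hP1 : ∑ t ∈ R, P t = 1) :
    ∑ t ∈ R, P t * Real.logb 2 (deg U V R (proj U t)) ≤ Real.logb 2 (lpNorm U V R ⊤) := by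
  have le_max : ∀ t ∈ R, Real.logb 2 (deg U V R (proj U t)) ≤ Real.logb 2 (lpNorm U V R ⊤) := by
    intro t ht
    have hu : proj U t ∈ projR U R := proj_mem_projR ht
    refine Real.logb_le_logb_of_le one_lt_two (Nat.cast_pos.mpr (deg_pos hu)) ?_
    rw [lpNorm_top, Nat.cast_le]
    exact Finset.le_sup hu
  calc ∑ t ∈ R, P t * Real.logb 2 (deg U V R (proj U t))
      ≤ ∑ t ∈ R, P t * Real.logb 2 (lpNorm U V R ⊤) :=
        Finset.sum_le_sum fun t ht => mul_le_mul_of_nonneg_left (le_max t ht) (hP t ht)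
    _ = Real.logb 2 (lpNorm U V R ⊤) := by rw [← Finset.sum_mul, hP1, one_mul]

theorem entropy_add_sum_mul_logb_deg_le_logb_lpNorm (hP : ∀ t ∈ R, 0 ≤ P t)
    (hP1 : ∑ t ∈ R, P t = 1) {p : ℝ≥0∞} (hp : 0 < p) (hp_top : p ≠ ⊤) :
    p.toReal⁻¹ * entropy P R U + ∑ t ∈ R, P t * Real.logb 2 (deg U V R (proj U t)) ≤
      Real.logb 2 (lpNorm U V R p) := by
  have d_pos : ∀ u ∈ projR U R, (0 : ℝ) < deg U V R u := fun u hu =>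
    Nat.cast_pos.mpr (deg_pos hu)
  have hr : 0 < p.toReal := ENNReal.toReal_pos hp.ne' hp_top
  have hR : R.Nonempty := Finset.nonempty_of_sum_ne_zero (hP1 ▸ one_ne_zero)
  have gibbs := entropy_add_sum_mul_logb_le hP hP1 fun u hu =>
    Real.rpow_pos_of_pos (d_pos u hu) p.toReal
  have log_rpow : ∑ t ∈ R, P t * Real.logb 2 ((deg U V R (proj U t) : ℝ) ^ p.toReal) =
      p.toReal * ∑ t ∈ R, P t * Real.logb 2 (deg U V R (proj U t)) := by
    rw [Finset.mul_sum]
    refine Finset.sum_congr rfl fun t ht => ?_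
    rw [Real.logb_rpow_eq_mul_logb_of_pos (d_pos _ (proj_mem_projR ht)), mul_left_comm]
  rw [log_rpow] at gibbs
  calc p.toReal⁻¹ * entropy P R U + ∑ t ∈ R, P t * Real.logb 2 (deg U V R (proj U t))
      = p.toReal⁻¹ * (entropy P R U +
          p.toReal * ∑ t ∈ R, P t * Real.logb 2 (deg U V R (proj U t))) := by
        rw [mul_add, inv_mul_cancel_left₀ hr.ne']
    _ ≤ p.toReal⁻¹ * Real.logb 2 (∑ u ∈ projR U R, (deg U V R u : ℝ) ^ p.toReal) := by
        gcongr
    _ = Real.logb 2 (lpNorm U V R p) := by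
        rw [lpNorm_of_ne_top hp_top, Real.logb_rpow_eq_mul_logb_of_pos (sum_deg_rpow_pos hR _),
          one_div]

theorem entropy_add_cond_entropy_le_logb_lpNorm (hP : ∀ t ∈ R, 0 ≤ P t)
    (hP1 : ∑ t ∈ R, P t = 1) {p : ℝ≥0∞} (hp : 0 < p) :
    (1 / p).toReal * entropy P R U + (entropy P R (U ∪ V) - entropy P R U) ≤
      Real.logb 2 (lpNorm U V R p) := by
  refine (add_le_add_right (entropy_union_sub_entropy_le hP hP1) _).trans ?_
  rw [one_div, ENNReal.toReal_inv]
  rcases eq_or_ne p ⊤ with rfl | hp_top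
  · simpa using sum_mul_logb_deg_le_logb_lpNorm_top hP hP1
  · exact entropy_add_sum_mul_logb_deg_le_logb_lpNorm hP hP1 hp hp_top

end Entropy

section Uniform

variable {A α : Type*}

/-- The uniform probability distribution on the tuples of `S`, as a weight function on all tuples;
it vanishes identically when `S` is empty. -/
noncomputable def uniformWeight (S : Finset (A → α)) : (A → α) → ℝ :=
  (S : Set (A → α)).indicator fun _ => (S.card : ℝ)⁻¹

variable {S R : Finset (A → α)}

theorem uniformWeight_nonneg (t : A → α) : 0 ≤ uniformWeight S t :=
  Set.indicator_nonneg (fun _ _ => by positivity) t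

theorem uniformWeight_of_mem {t : A → α} (ht : t ∈ S) : uniformWeight S t = (S.card : ℝ)⁻¹ :=
  Set.indicator_of_mem (Finset.mem_coe.mpr ht) _

theorem uniformWeight_of_notMem {t : A → α} (ht : t ∉ S) : uniformWeight S t = 0 :=
  Set.indicator_of_notMem (fun h => ht (Finset.mem_coe.mp h)) _

theorem sum_uniformWeight (hS : S.Nonempty) (hSR : S ⊆ R) : ∑ t ∈ R, uniformWeight S t = 1 := by
  rw [← Finset.sum_subset hSR fun t _ ht => uniformWeight_of_notMem ht,
    Finset.sum_congr rfl fun t ht => uniformWeight_of_mem ht, Finset.sum_const, nsmul_eq_mul,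
    mul_inv_cancel₀ (Nat.cast_ne_zero.mpr hS.card_pos.ne')]

variable [Fintype A] [DecidableEq A] [DecidableEq α]

theorem entropy_uniformWeight_univ (hS : S.Nonempty) :
    entropy (uniformWeight S) S Finset.univ = Real.logb 2 S.card := by
  have log_weight : ∀ t ∈ S, uniformWeight S t * Real.logb 2 (uniformWeight S t) =
      uniformWeight S t * -Real.logb 2 S.card := fun t ht => by
    rw [← Real.logb_inv, uniformWeight_of_mem ht]
  rw [entropy_univ, Finset.sum_congr rfl log_weight, ← Finset.sum_mul,
    sum_uniformWeight hS subset_rfl, one_mul, neg_neg]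

end Uniform

section OutputBound

variable {ι X : Type*} [Fintype ι] [Fintype X] [DecidableEq X] {U V : ι → Finset X} {w : ι → ℝ}
  {p : ι → ℝ≥0∞}

theorem card_le_prod_lpNorm_of_uniform {β : Type*} [DecidableEq β] {S : Finset (X → β)}
    (hS : S.Nonempty) (hw : ∀ i, 0 ≤ w i) (hp : ∀ i, 0 < p i)
    (hii : entropy (uniformWeight S) S Finset.univ ≤
      ∑ i, w i * ((1 / p i).toReal * entropy (uniformWeight S) S (U i) +
        (entropy (uniformWeight S) S (U i ∪ V i) - entropy (uniformWeight S) S (U i)))) :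
    (S.card : ℝ) ≤ ∏ i, lpNorm (U i) (V i) S (p i) ^ w i := by
  have norm_pos (i : ι) : 0 < lpNorm (U i) (V i) S (p i) := lpNorm_pos hS
  have rpow_pos (i : ι) : 0 < lpNorm (U i) (V i) S (p i) ^ w i :=
    Real.rpow_pos_of_pos (norm_pos i) _
  rw [← Real.logb_le_logb one_lt_two (Nat.cast_pos.mpr hS.card_pos)
    (Finset.prod_pos fun i _ => rpow_pos i)]
  calc Real.logb 2 S.card
      ≤ ∑ i, w i * ((1 / p i).toReal * entropy (uniformWeight S) S (U i) +
          (entropy (uniformWeight S) S (U i ∪ V i) - entropy (uniformWeight S) S (U i))) :=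
        (entropy_uniformWeight_univ hS).ge.trans hii
    _ ≤ ∑ i, w i * Real.logb 2 (lpNorm (U i) (V i) S (p i)) := by
        gcongr with i
        · exact hw i
        · exact entropy_add_cond_entropy_le_logb_lpNorm (fun t _ => uniformWeight_nonneg t)
            (sum_uniformWeight hS subset_rfl) (hp i)
    _ = Real.logb 2 (∏ i, lpNorm (U i) (V i) S (p i) ^ w i) := by
        rw [Real.logb_prod _ _ fun i _ => (rpow_pos i).ne']
        exact Finset.sum_congr rfl fun i _ =>
          (Real.logb_rpow_eq_mul_logb_of_pos (norm_pos i)).symm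

theorem query_output_lp_bound_general (hw : ∀ i, 0 ≤ w i) (hp : ∀ i, 0 < p i)
    (hii : ∀ (β : Type) [Fintype β] [DecidableEq β] (P : (X → β) → ℝ),
      (∀ t, 0 ≤ P t) → (∑ t, P t = 1) →
      ∑ i, w i * ((1 / p i).toReal * entropy P Finset.univ (U i) +
          (entropy P Finset.univ (U i ∪ V i) - entropy P Finset.univ (U i)))
        ≥ entropy P Finset.univ (Finset.univ : Finset X))
    {γ : Type*} [DecidableEq γ] {R : ι → Finset (X → γ)} {T : Finset (X → γ)}
    (hguard : ∀ i, projR (U i ∪ V i) T ⊆ projR (U i ∪ V i) (R i)) :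
    (T.card : ℝ) ≤ ∏ i, lpNorm (U i) (V i) (R i) (p i) ^ w i := by
  rcases T.eq_empty_or_nonempty with rfl | hT
  · rw [Finset.card_empty, Nat.cast_zero]
    exact Finset.prod_nonneg fun i _ => Real.rpow_nonneg lpNorm_nonneg _
  suffices hTT : (T.card : ℝ) ≤ ∏ i, lpNorm (U i) (V i) T (p i) ^ w i from
    hTT.trans <| Finset.prod_le_prod (fun i _ => Real.rpow_nonneg lpNorm_nonneg _) fun i _ =>
      Real.rpow_le_rpow lpNorm_nonneg (lpNorm_mono (hguard i)) (hw i)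
  -- `γ` may be infinite and in any universe, so the values occurring in `T` are renamed to `Fin n`.
  obtain ⟨n, f, S, rfl⟩ := exists_map_arrowCongrRight_eq T
  have hS : S.Nonempty := Finset.map_nonempty.mp hT
  have hiiS := hii (Fin n) (uniformWeight S) uniformWeight_nonneg
    (sum_uniformWeight hS (Finset.subset_univ S))
  simp only [entropy_eq_of_subset (Finset.subset_univ S)
    fun _ _ ht => uniformWeight_of_notMem ht] at hiiS
  simpa only [lpNorm_map, Finset.card_map] using card_le_prod_lpNorm_of_uniform hS hw hp hiiS

end OutputBound

/-- **Theorem: `ℓ_p` bounds on the query output size.**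
Let `Q(X) = ⋀_j R_j(Y_j)` be a full conjunctive query (the relations are represented by
finite sets of full tuples over the variable set `X`; the relation `R_j` only "uses" the
attributes in `Y j`, i.e. the join condition and the degree statistics only look at those
coordinates).  If the information inequality
`∑ i, w i * ((1/p i)·h(U i) + h(V i|U i)) ≥ h(X)` holds for every entropic vector `h`
(of jointly distributed finite-range random variables indexed by `X`), and each conditional
`(V i|U i)` is guarded by atom `j i`, then for every database instance `D` the output size
satisfies `|Q(D)| ≤ ∏ i, ‖deg_{D (j i)}(V i|U i)‖_{p i} ^ (w i)`. -/
theorem query_output_lp_bound {X : Type*} [Fintype X] [DecidableEq X]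
    (m : ℕ) (Y : Fin m → Finset X) (hcover : ∀ x : X, ∃ j, x ∈ Y j)
    (s : ℕ) (U V : Fin s → Finset X) (w : Fin s → ℝ) (hw : ∀ i, 0 ≤ w i)
    (p : Fin s → ℝ≥0∞) (hp : ∀ i, 0 < p i)
    (j : Fin s → Fin m) (hguard : ∀ i, U i ∪ V i ⊆ Y (j i))
    (hii : ∀ (β : Type) [Fintype β] [DecidableEq β] (P : (X → β) → ℝ),
      (∀ t, 0 ≤ P t) → (∑ t, P t = 1) →
      ∑ i, w i * ((1 / p i).toReal * entropy P Finset.univ (U i) +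
          (entropy P Finset.univ (U i ∪ V i) - entropy P Finset.univ (U i)))
        ≥ entropy P Finset.univ (Finset.univ : Finset X))
    (γ : Type*) [DecidableEq γ]
    (D : Fin m → Finset (X → γ)) (Q : Finset (X → γ))
    (hQ : ∀ t, t ∈ Q ↔ ∀ k : Fin m, ∃ t' ∈ D k, ∀ x ∈ Y k, t x = t' x) :
    (Q.card : ℝ) ≤ ∏ i, lpNorm (U i) (V i) (D (j i)) (p i) ^ (w i) := by
  have atom (k : Fin m) : projR (Y k) Q ⊆ projR (Y k) (D k) :=
    projR_subset_projR_iff.2 fun t ht => (hQ t).1 ht k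
  exact query_output_lp_bound_general hw hp hii fun i =>
    projR_subset_projR_of_subset (hguard i) (atom (j i))

end JoinBounds
end

section
/- Let Q(X) = ⋀_{j∈[m]} R_j(Y_j) be a full conjunctive query with n = |X| variables, let Σ = {τ_1, …, τ_s} be a simple set of abstract statistics over X (each τ_i = ((V_i|U_i), p_i) with |U_i| ≤ 1), each guarded by some atom R_{j_i} of Q (i.e. U_i ∪ V_i ⊆ Y_{j_i}), and let b ∈ ℝ^s with b_i > 0 for all i. Suppose L := Log-U-Bound_{Γ_n}(Σ, b) is finite. Then there exists a database instance D = (R_1^D, …, R_m^D) such that ||deg_{R_{j_i}^D}(V_i|U_i)||_{p_i} ≤ 2^{b_i} for all i ∈ [s], and |Q(D)| ≥ 2^{L − 2^n}. -/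
open scoped BigOperators ENNReal

namespace JoinBounds

noncomputable section

variable {A α : Type*}

noncomputable section

variable {A : Type*}

/-- `h(τ)` for the abstract statistics `τ = ((V|U), p)`:
`(1/p)·h(U) + h(V|U)` where `h(V|U) = h(U ∪ V) - h(U)` and `1/∞ = 0`. -/
def statVal [DecidableEq A] (h : Finset A → ℝ) (U V : Finset A) (p : ℝ≥0∞) : ℝ :=
  (1 / p).toReal * h U + (h (U ∪ V) - h U)

/-- A polymatroid on the variable set `A`. -/
def IsPolymatroid [DecidableEq A] (h : Finset A → ℝ) : Prop :=
  h ∅ = 0 ∧ (∀ U V : Finset A, U ⊆ V → h U ≤ h V) ∧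
    ∀ U V : Finset A, h U + h V ≥ h (U ∪ V) + h (U ∩ V)

/-- The set `Γ_n` of polymatroids. -/
def Gamma (A : Type*) [DecidableEq A] : Set (Finset A → ℝ) := {h | IsPolymatroid h}

/-- The step function `h^W`. -/
def stepFn [DecidableEq A] (W : Finset A) : Finset A → ℝ :=
  fun U => if (U ∩ W).Nonempty then 1 else 0

/-- The set `N_n` of normal polymatroids: nonnegative linear combinations of step functions. -/
def Normal (A : Type*) [Fintype A] [DecidableEq A] : Set (Finset A → ℝ) :=
  {h | ∃ α : Finset A → ℝ, (∀ W, 0 ≤ α W) ∧ h = ∑ W : Finset A, α W • stepFn W}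

/-- `Log-U-Bound_K(Σ, b)`: the infimum of `∑ i, w i * b i` over all nonnegative `w` such that the
`Σ`-inequality `∑ i, w i * h(τ i) ≥ h(X)` is valid for all `h ∈ K` (an `EReal`; `⊤` if no valid
inequality exists). -/
def LogUBound [Fintype A] [DecidableEq A] (K : Set (Finset A → ℝ)) (s : ℕ)
    (U V : Fin s → Finset A) (p : Fin s → ℝ≥0∞) (b : Fin s → ℝ) : EReal :=
  sInf {r : EReal | ∃ w : Fin s → ℝ, (∀ i, 0 ≤ w i) ∧
    (∀ h ∈ K, ∑ i, w i * statVal h (U i) (V i) (p i) ≥ h Finset.univ) ∧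
    r = ((∑ i, w i * b i : ℝ) : EReal)}

/-- `Log-L-Bound_K(Σ, b)`: the supremum of `h(X)` over all `h ∈ K` satisfying the
log-statistics `h(τ i) ≤ b i` (an `EReal`). -/
def LogLBound [Fintype A] [DecidableEq A] (K : Set (Finset A → ℝ)) (s : ℕ)
    (U V : Fin s → Finset A) (p : Fin s → ℝ≥0∞) (b : Fin s → ℝ) : EReal :=
  sSup {r : EReal | ∃ h ∈ K, (∀ i, statVal h (U i) (V i) (p i) ≤ b i) ∧
    r = ((h Finset.univ : ℝ) : EReal)}

end

/-!
Every polymatroid `h` dominates a normal polymatroid that agrees with it on singletons and on the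
full variable set. For simple statistics, the `Σ`-inequalities valid on `Γ_n` are therefore those
valid on `N_n`, and the latter need only be tested on the finitely many step functions. The bound
is thus the value of a linear program, and its dual optimum is a normal polymatroid
`h = ∑ W, c W • stepFn W` with `h(τ_i) ≤ b_i` and `h(X) ≥ L`.

Such an `h` is realized by a relation whose tuples are assignments of independent coordinates
`ω_W`, each visible exactly in the attributes of `W` and ranging over `2 ^ c W` values. All its
degree sequences are constant, so its `ℓ_p`-norms are `2 ^ h(τ)`. Rounding the `2 ^ n` numbers of
values down to integers costs at most a factor of `2` each.
-/

section LinearProgramming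

open scoped Matrix

variable {K : Type*} [Field K] [LinearOrder K] [IsStrictOrderedRing K]

/-- Farkas' lemma. If `f a` cannot be dropped from the hypothesis, some `x₀` has `f a x₀ < 0` and
violates only the inequalities at `a` and `g`; projecting along `x₀` onto the kernel of `f a`
eliminates `f a` (the argument of D. Bartl). -/
theorem exists_eq_sum_smul_of_forall_nonneg {E ι : Type*} [AddCommGroup E] [Module K E]
    (s : Finset ι) (f : ι → E →ₗ[K] K) (g : E →ₗ[K] K)
    (h : ∀ x, (∀ i ∈ s, 0 ≤ f i x) → 0 ≤ g x) :
    ∃ c : ι → K, (∀ i, 0 ≤ c i) ∧ g = ∑ i ∈ s, c i • f i := by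
  classical
  induction s using Finset.induction_on generalizing f g with
  | empty =>
    refine ⟨0, fun _ => le_rfl, LinearMap.ext fun x => ?_⟩
    have hneg := h (-x) (by simp)
    rw [map_neg, neg_nonneg] at hneg
    simpa using hneg.antisymm (h x (by simp))
  | insert a s ha ih =>
    suffices ∃ (c : ι → K) (d : K), (∀ i, 0 ≤ c i) ∧ 0 ≤ d ∧
        g = d • f a + ∑ i ∈ s, c i • f i by
      obtain ⟨c, d, hc, hd, rfl⟩ := this
      refine ⟨Function.update c a d, fun i => ?_, ?_⟩
      · by_cases hi : i = a
        · simpa [hi] using hd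
        · simpa [hi] using hc i
      · rw [Finset.sum_insert ha, Function.update_self]
        congr 1
        refine Finset.sum_congr rfl fun i hi => ?_
        rw [Function.update_of_ne (ne_of_mem_of_not_mem hi ha)]
    by_cases hs : ∀ x, (∀ i ∈ s, 0 ≤ f i x) → 0 ≤ g x
    · obtain ⟨c, hc, hg⟩ := ih f g hs
      exact ⟨c, 0, hc, le_rfl, by simpa using hg⟩
    push Not at hs
    obtain ⟨x₀, hfx₀, hgx₀⟩ := hs
    have hax₀ : f a x₀ < 0 := by
      by_contra! hnonneg
      exact hgx₀.not_ge (h x₀ (Finset.forall_mem_insert _ _ _ |>.2 ⟨hnonneg, hfx₀⟩))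
    let P : E →ₗ[K] E := LinearMap.id - (f a).smulRight ((f a x₀)⁻¹ • x₀)
    have hP (l : E →ₗ[K] K) (x : E) : l (P x) = l x - f a x * ((f a x₀)⁻¹ * l x₀) := by simp [P]
    obtain ⟨c, hc, hg⟩ := ih (fun i => f i ∘ₗ P) (g ∘ₗ P) fun x hx => by
      refine h (P x) (Finset.forall_mem_insert _ _ _ |>.2 ⟨?_, hx⟩)
      rw [hP, inv_mul_cancel₀ hax₀.ne, mul_one, sub_self]
    let l : E →ₗ[K] K := g - ∑ i ∈ s, c i • f i
    have hlP (x : E) : l (P x) = 0 := by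
      simpa [l, sub_eq_zero] using LinearMap.congr_fun hg x
    have hlx₀ : l x₀ ≤ 0 := by
      have hsum : 0 ≤ ∑ i ∈ s, c i * f i x₀ :=
        Finset.sum_nonneg fun i hi => mul_nonneg (hc i) (hfx₀ i hi)
      simpa [l] using hgx₀.le.trans hsum
    refine ⟨c, (f a x₀)⁻¹ * l x₀, hc,
      mul_nonneg_of_nonpos_of_nonpos (inv_nonpos.2 hax₀.le) hlx₀,
      sub_eq_iff_eq_add.1 (LinearMap.ext fun x => ?_)⟩
    have hlx := hlP x
    rw [hP, sub_eq_zero] at hlx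
    simpa [l, mul_comm] using hlx

variable {κ ι : Type*} [Fintype κ] {M : Matrix κ ι K} {b : κ → K} {c : ι → K} {L : K}

lemma mul_le_dotProduct_of_forall_le (hfeasible : ∃ w, 0 ≤ w ∧ c ≤ w ᵥ* M)
    (hL : ∀ w, 0 ≤ w → c ≤ w ᵥ* M → L ≤ w ⬝ᵥ b) {w : κ → K} {t : K} (hw : 0 ≤ w) (ht : 0 ≤ t)
    (hwt : t • c ≤ w ᵥ* M) : t * L ≤ w ⬝ᵥ b := by
  obtain ⟨w₀, hw₀, hc⟩ := hfeasible
  have hgap : 0 ≤ w₀ ⬝ᵥ b - L := sub_nonneg.2 (hL w₀ hw₀ hc)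
  -- Perturbing towards `w₀` makes `t` positive, so that the pair can be rescaled to `t = 1`.
  have hperturb (ε : K) (hε : 0 < ε) : t * L ≤ w ⬝ᵥ b + ε * (w₀ ⬝ᵥ b - L) := by
    have hpos : 0 < t + ε := by positivity
    have hscaled := hL ((t + ε)⁻¹ • (w + ε • w₀)) (by positivity) (by
      rw [Matrix.smul_vecMul, Matrix.add_vecMul, Matrix.smul_vecMul, le_inv_smul_iff_of_pos hpos,
        add_smul]
      gcongr)
    rw [smul_dotProduct, add_dotProduct, smul_dotProduct, smul_eq_mul, smul_eq_mul,
      le_inv_mul_iff₀ hpos] at hscaled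
    linarith
  refine le_of_forall_pos_le_add fun δ hδ => (hperturb (δ / (w₀ ⬝ᵥ b - L + 1)) ?_).trans ?_
  · positivity
  · rw [div_mul_eq_mul_div]
    gcongr
    exact div_le_of_le_mul₀ (by positivity) hδ.le (by gcongr; linarith)

/-- Strong duality of linear programming, with attainment: Farkas' lemma for the homogenized
constraints `0 ≤ w`, `0 ≤ t`, `t • c ≤ w ᵥ* M` on pairs `(w, t)`. -/
theorem exists_mulVec_le_of_forall_le_dotProduct [Fintype ι]
    (hfeasible : ∃ w, 0 ≤ w ∧ c ≤ w ᵥ* M) (hL : ∀ w, 0 ≤ w → c ≤ w ᵥ* M → L ≤ w ⬝ᵥ b) :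
    ∃ x, 0 ≤ x ∧ M *ᵥ x ≤ b ∧ L ≤ c ⬝ᵥ x := by
  classical
  let fst := LinearMap.fst K (κ → K) K
  let snd := LinearMap.snd K (κ → K) K
  let constraint : Option (κ ⊕ ι) → (κ → K) × K →ₗ[K] K
    | none => snd
    | some (.inl k) => LinearMap.proj k ∘ₗ fst
    | some (.inr i) => LinearMap.proj i ∘ₗ M.vecMulLinear ∘ₗ fst - c i • snd
  let objective : (κ → K) × K →ₗ[K] K := Fintype.linearCombination K b ∘ₗ fst - L • snd
  have hobjective (w : κ → K) (t : K) : objective (w, t) = w ⬝ᵥ b - L * t := by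
    simp [objective, fst, snd, Fintype.linearCombination_apply, dotProduct]
  obtain ⟨y, hy, hsum⟩ := exists_eq_sum_smul_of_forall_nonneg Finset.univ constraint objective (by
    rintro ⟨w, t⟩ hwt
    have ht : 0 ≤ t := hwt none (Finset.mem_univ _)
    have hw : 0 ≤ w := fun k => hwt (some (.inl k)) (Finset.mem_univ _)
    have hc : t • c ≤ w ᵥ* M := fun i => by
      simpa [constraint, fst, snd, mul_comm] using hwt (some (.inr i)) (Finset.mem_univ _)
    rw [hobjective, sub_nonneg, mul_comm]
    exact mul_le_dotProduct_of_forall_le hfeasible hL hw ht hc)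
  let x : ι → K := fun i => y (some (.inr i))
  have hdecomp (w : κ → K) (t : K) : w ⬝ᵥ b - L * t =
      y none * t + (∑ k, y (some (.inl k)) * w k + ∑ i, x i * ((w ᵥ* M) i - c i * t)) := by
    have := LinearMap.congr_fun hsum (w, t)
    simpa [hobjective, Fintype.sum_option, Fintype.sum_sum_type, constraint, fst, snd, x] using this
  refine ⟨x, fun i => hy _, fun k => ?_, ?_⟩
  · have hcoeff : b k = y (some (.inl k)) + ∑ i, x i * M k i := by
      simpa [Pi.single_apply] using hdecomp (Pi.single k 1) 0
    rw [hcoeff, Matrix.mulVec, dotProduct_comm]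
    exact le_add_of_nonneg_left (hy _)
  · have hcoeff : -L = y none - ∑ i, x i * c i := by
      simpa [sub_eq_add_neg] using hdecomp 0 1
    rw [dotProduct_comm, dotProduct]
    linarith [hy none]

end LinearProgramming

section Polymatroid

open scoped NNReal

variable {X : Type*} [DecidableEq X] {g h : Finset X → ℝ}

/-- The contraction `U ↦ h(U|a)` of `h` by the element `a`. -/
def contraction (h : Finset X → ℝ) (a : X) (U : Finset X) : ℝ :=
  h (insert a U) - h {a}

/-- The mutual information `I(U;a) = h(U) + h(a) - h(U ∪ {a})`. -/
def mutualInfo (h : Finset X → ℝ) (a : X) (U : Finset X) : ℝ :=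
  h U - contraction h a U

lemma IsPolymatroid.contract (hh : IsPolymatroid h) (a : X) : IsPolymatroid (contraction h a) := by
  refine ⟨by simp [contraction], fun U V hUV => ?_, fun U V => ?_⟩
  · exact sub_le_sub_right (hh.2.1 _ _ (Finset.insert_subset_insert a hUV)) _
  · have hsubmod := hh.2.2 (insert a U) (insert a V)
    rw [← Finset.insert_union_distrib, ← Finset.insert_inter_distrib] at hsubmod
    simp only [contraction]
    linarith

lemma IsPolymatroid.mutualInfo_mono (hh : IsPolymatroid h) (a : X) {U V : Finset X}
    (hUV : U ⊆ V) : mutualInfo h a U ≤ mutualInfo h a V := by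
  have hsubmod := hh.2.2 (insert a U) V
  rw [Finset.insert_union, Finset.union_eq_right.2 hUV] at hsubmod
  have hinter := hh.2.1 U (insert a U ∩ V) (Finset.subset_inter (Finset.subset_insert a U) hUV)
  simp only [mutualInfo, contraction]
  linarith

lemma IsPolymatroid.mutualInfo_nonneg (hh : IsPolymatroid h) (a : X) (U : Finset X) :
    0 ≤ mutualInfo h a U := by
  have hempty : mutualInfo h a ∅ = 0 := by simp [mutualInfo, contraction, hh.1]
  exact hempty.ge.trans (hh.mutualInfo_mono a U.empty_subset)

lemma isPolymatroid_stepFn (W : Finset X) : IsPolymatroid (stepFn W) := by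
  refine ⟨by simp [stepFn], fun U V hUV => ?_, fun U V => ?_⟩
  · have himp : (U ∩ W).Nonempty → (V ∩ W).Nonempty :=
      Finset.Nonempty.mono (Finset.inter_subset_inter_right hUV)
    simp only [stepFn]
    split_ifs <;> simp_all
  · have hinter : (U ∩ V ∩ W).Nonempty → (U ∩ W).Nonempty ∧ (V ∩ W).Nonempty := fun hUVW =>
      ⟨hUVW.mono (Finset.inter_subset_inter_right Finset.inter_subset_left),
        hUVW.mono (Finset.inter_subset_inter_right Finset.inter_subset_right)⟩
    simp only [stepFn, Finset.union_inter_distrib_right, Finset.union_nonempty]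
    split_ifs <;> simp_all

lemma sup_eq_sup_tsub_add_smul_stepFn {f : X → ℝ≥0} {T : Finset X} {c : ℝ≥0}
    (hT : ∀ x ∈ T, c ≤ f x) (hT' : ∀ x ∉ T, f x = 0) (U : Finset X) :
    ((U.sup f : ℝ≥0) : ℝ) =
      ((U.sup fun x => f x - c : ℝ≥0) : ℝ) + ((c : ℝ) • stepFn T) U := by
  have hsup : (U.sup fun x => f x - c) = U.sup f - c :=
    (Finset.apply_sup_eq_sup_comp_of_linearOrder (· - c) (fun _ _ hab => tsub_le_tsub_right hab c)
      (by simp)).symm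
  rw [hsup, Pi.smul_apply, smul_eq_mul, stepFn]
  split_ifs with hU
  · obtain ⟨x, hx⟩ := hU
    obtain ⟨hxU, hxT⟩ := Finset.mem_inter.1 hx
    rw [mul_one, ← NNReal.coe_add, tsub_add_cancel_of_le ((hT x hxT).trans (Finset.le_sup hxU))]
  · have hzero : U.sup f = 0 := Finset.sup_eq_bot_iff _ _ |>.2 fun x hx =>
      hT' x fun hxT => hU ⟨x, Finset.mem_inter.2 ⟨hx, hxT⟩⟩
    simp [hzero]

variable [Fintype X]

lemma add_mem_normal (hg : g ∈ Normal X) (hh : h ∈ Normal X) : g + h ∈ Normal X := by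
  obtain ⟨c, hc, rfl⟩ := hg
  obtain ⟨d, hd, rfl⟩ := hh
  exact ⟨c + d, fun W => add_nonneg (hc W) (hd W), by simp [add_smul, Finset.sum_add_distrib]⟩

lemma zero_mem_normal : (0 : Finset X → ℝ) ∈ Normal X :=
  ⟨0, fun _ => le_rfl, by simp⟩

lemma smul_stepFn_mem_normal {c : ℝ} (hc : 0 ≤ c) (W : Finset X) : c • stepFn W ∈ Normal X := by
  have hsingle : (0 : Finset X → ℝ) ≤ Pi.single W c := Pi.single_nonneg.2 hc
  refine ⟨Pi.single W c, hsingle, ?_⟩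
  rw [Finset.sum_eq_single W (fun W' _ hW' => by simp [hW']) (by simp), Pi.single_eq_same]

lemma sup_mem_normal (f : X → ℝ≥0) : (fun U : Finset X => ((U.sup f : ℝ≥0) : ℝ)) ∈ Normal X := by
  induction hT : Finset.univ.filter (f · ≠ 0) using Finset.strongInduction generalizing f with
  | _ T ih =>
  obtain rfl | hne := T.eq_empty_or_nonempty
  · have hf : f = 0 := funext fun x => by
      simpa using Finset.filter_eq_empty_iff.1 hT (Finset.mem_univ x)
    convert zero_mem_normal (X := X) using 1
    ext U
    simp [hf, ← bot_eq_zero']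
  · have hmem (x : X) : x ∈ T ↔ f x ≠ 0 := by simp [← hT]
    obtain ⟨a, haT, hmin⟩ := T.exists_min_image f hne
    have hlt : Finset.univ.filter (fun x => f x - f a ≠ 0) ⊂ T := by
      refine (Finset.ssubset_iff_of_subset fun x hx => ?_).2 ⟨a, haT, by simp⟩
      rw [hmem]
      intro hfx
      simp [hfx] at hx
    convert add_mem_normal (ih _ hlt _ rfl) (smul_stepFn_mem_normal (f a).2 T) using 1
    exact funext (sup_eq_sup_tsub_add_smul_stepFn hmin fun x => by simp [hmem])

/-- Peel off one element `a` of the support: recurse on the contraction by `a`, and add the normal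
polymatroid `U ↦ max_{x ∈ U} I(x;a)`, which is at most `I(U;a)`, with equality at singletons and
at the full set. -/
lemma IsPolymatroid.exists_normal_le_of_support (S : Finset X) (hh : IsPolymatroid h)
    (hS : ∀ U, h U = h (U ∩ S)) :
    ∃ g ∈ Normal X, g ≤ h ∧ g Finset.univ = h Finset.univ ∧ ∀ x, g {x} = h {x} := by
  induction S using Finset.induction_on generalizing h with
  | empty =>
    have hzero (U : Finset X) : h U = 0 := by rw [hS, Finset.inter_empty, hh.1]
    exact ⟨0, zero_mem_normal, fun U => (hzero U).ge, (hzero _).symm, fun x => (hzero _).symm⟩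
  | insert a S _ ih =>
    have hsupport (U : Finset X) : contraction h a U = contraction h a (U ∩ S) := by
      rw [contraction, hS, ← Finset.insert_inter_distrib, contraction]
    obtain ⟨g, hgN, hle, huniv, hsingle⟩ := ih (hh.contract a) hsupport
    let f : X → ℝ≥0 := fun x => ⟨mutualInfo h a {x}, hh.mutualInfo_nonneg a {x}⟩
    have hsup_le (U : Finset X) : ((U.sup f : ℝ≥0) : ℝ) ≤ mutualInfo h a U := by
      have : U.sup f ≤ ⟨mutualInfo h a U, hh.mutualInfo_nonneg a U⟩ :=
        Finset.sup_le fun x hx => hh.mutualInfo_mono a (Finset.singleton_subset_iff.2 hx)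
      exact this
    refine ⟨_, add_mem_normal hgN (sup_mem_normal f), fun U => ?_, ?_, fun x => ?_⟩
    · have := add_le_add (hle U) (hsup_le U)
      simpa [mutualInfo] using this
    · have hself : mutualInfo h a {a} = mutualInfo h a Finset.univ := by
        simp [mutualInfo, contraction]
      have hsup : ((Finset.univ.sup f : ℝ≥0) : ℝ) = mutualInfo h a Finset.univ :=
        (hsup_le _).antisymm (hself.ge.trans (Finset.le_sup (f := f) (Finset.mem_univ a)))
      simp [hsup, huniv, mutualInfo]
    · rw [Pi.add_apply, hsingle, Finset.sup_singleton]
      exact add_sub_cancel (contraction h a {x}) (h {x})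

lemma IsPolymatroid.exists_normal_le (hh : IsPolymatroid h) :
    ∃ g ∈ Normal X, g ≤ h ∧ g Finset.univ = h Finset.univ ∧ ∀ x, g {x} = h {x} :=
  hh.exists_normal_le_of_support Finset.univ fun U => by rw [Finset.inter_univ]

end Polymatroid

section Bounds

open scoped Matrix

variable {X : Type*} [DecidableEq X]

lemma statVal_sum_smul {ι : Type*} (s : Finset ι) (c : ι → ℝ) (f : ι → Finset X → ℝ)
    (U V : Finset X) (p : ℝ≥0∞) :
    statVal (∑ i ∈ s, c i • f i) U V p = ∑ i ∈ s, c i * statVal (f i) U V p := by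
  simp only [statVal, Finset.sum_apply, Pi.smul_apply, smul_eq_mul, mul_add, mul_sub,
    Finset.sum_add_distrib, Finset.sum_sub_distrib, Finset.mul_sum, mul_left_comm]

lemma statVal_le_statVal {g h : Finset X → ℝ} (hle : g ≤ h) {U : Finset X} (hU : g U = h U)
    (V : Finset X) (p : ℝ≥0∞) : statVal g U V p ≤ statVal h U V p := by
  have := hle (U ∪ V)
  simp only [statVal, hU]
  gcongr

variable [Fintype X] {s : ℕ} {U V : Fin s → Finset X} {p : Fin s → ℝ≥0∞}

/-- The `Σ`-inequality with coefficients `w` holds on `K`: the constraint on `w` in the linear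
program defining `LogUBound K`. -/
def SigmaInequality (K : Set (Finset X → ℝ)) (U V : Fin s → Finset X) (p : Fin s → ℝ≥0∞)
    (w : Fin s → ℝ) : Prop :=
  ∀ h ∈ K, ∑ i, w i * statVal h (U i) (V i) (p i) ≥ h Finset.univ

lemma sigmaInequality_normal_iff {w : Fin s → ℝ} :
    SigmaInequality (Normal X) U V p w ↔
      ∀ W, stepFn W Finset.univ ≤ ∑ i, w i * statVal (stepFn W) (U i) (V i) (p i) := by
  refine ⟨fun hw W => hw _ (by simpa using smul_stepFn_mem_normal zero_le_one W), ?_⟩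
  rintro hw _ ⟨c, hc, rfl⟩
  calc (∑ W, c W • stepFn W) Finset.univ
      = ∑ W, c W * stepFn W Finset.univ := by simp
    _ ≤ ∑ W, c W * ∑ i, w i * statVal (stepFn W) (U i) (V i) (p i) :=
      Finset.sum_le_sum fun W _ => mul_le_mul_of_nonneg_left (hw W) (hc W)
    _ = ∑ i, w i * statVal (∑ W, c W • stepFn W) (U i) (V i) (p i) := by
      simp only [statVal_sum_smul, Finset.mul_sum]
      rw [Finset.sum_comm]
      simp only [mul_left_comm]

lemma sigmaInequality_gamma_iff_normal (hsimple : ∀ i, (U i).card ≤ 1) {w : Fin s → ℝ}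
    (hw : ∀ i, 0 ≤ w i) :
    SigmaInequality (Gamma X) U V p w ↔ SigmaInequality (Normal X) U V p w := by
  refine ⟨fun hvalid => sigmaInequality_normal_iff.2 fun W => hvalid _ (isPolymatroid_stepFn W),
    fun hvalid h hh => ?_⟩
  obtain ⟨g, hg, hle, huniv, hsingle⟩ := IsPolymatroid.exists_normal_le hh
  have hsimple_eq (i : Fin s) : g (U i) = h (U i) := by
    obtain hU | hU := Nat.le_one_iff_eq_zero_or_eq_one.1 (hsimple i)
    · obtain ⟨c, -, rfl⟩ := hg
      rw [Finset.card_eq_zero.1 hU, hh.1]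
      simp [stepFn]
    · obtain ⟨x, hx⟩ := Finset.card_eq_one.1 hU
      rw [hx, hsingle]
  calc h Finset.univ = g Finset.univ := huniv.symm
    _ ≤ ∑ i, w i * statVal g (U i) (V i) (p i) := hvalid g hg
    _ ≤ ∑ i, w i * statVal h (U i) (V i) (p i) := Finset.sum_le_sum fun i _ =>
      mul_le_mul_of_nonneg_left (statVal_le_statVal hle (hsimple_eq i) (V i) (p i)) (hw i)

theorem logUBound_gamma_eq_normal (hsimple : ∀ i, (U i).card ≤ 1) (b : Fin s → ℝ) :
    LogUBound (Gamma X) s U V p b = LogUBound (Normal X) s U V p b := by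
  unfold LogUBound
  congr with r
  exact exists_congr fun w => and_congr_right fun hw => and_congr_left fun _ =>
    sigmaInequality_gamma_iff_normal hsimple hw

theorem exists_normal_of_logUBound_eq {b : Fin s → ℝ} {L : ℝ}
    (hL : LogUBound (Normal X) s U V p b = L) :
    ∃ h ∈ Normal X, (∀ i, statVal h (U i) (V i) (p i) ≤ b i) ∧ L ≤ h Finset.univ := by
  let M : Matrix (Fin s) (Finset X) ℝ :=
    .of fun i W => statVal (stepFn W) (U i) (V i) (p i)
  have hvalid (w : Fin s → ℝ) : (fun W => stepFn W Finset.univ) ≤ w ᵥ* M ↔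
      SigmaInequality (Normal X) U V p w := sigmaInequality_normal_iff.symm
  have hfeasible : ∃ w, 0 ≤ w ∧ (fun W => stepFn W Finset.univ) ≤ w ᵥ* M := by
    by_contra! hinfeasible
    refine EReal.coe_ne_top L (hL.symm.trans (sInf_eq_top.2 ?_))
    rintro _ ⟨w, hw, hwv, -⟩
    exact absurd ((hvalid w).2 hwv) (hinfeasible w hw)
  have hbound (w : Fin s → ℝ) (hw : 0 ≤ w) (hwv : (fun W => stepFn W Finset.univ) ≤ w ᵥ* M) :
      L ≤ w ⬝ᵥ b :=
    EReal.coe_le_coe_iff.1 (hL.ge.trans (sInf_le ⟨w, hw, (hvalid w).1 hwv, rfl⟩))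
  obtain ⟨c, hc, hcb, hcL⟩ := exists_mulVec_le_of_forall_le_dotProduct hfeasible hbound
  refine ⟨∑ W, c W • stepFn W, ⟨c, hc, rfl⟩, fun i => ?_, ?_⟩
  · simpa [statVal_sum_smul, Matrix.mulVec, dotProduct, M, mul_comm] using hcb i
  · simpa [dotProduct, mul_comm] using hcL

end Bounds

section Degrees

variable {A α : Type*} [Fintype A] [DecidableEq A] [DecidableEq α]

lemma card_projR_univ (R : Finset (A → α)) : (projR Finset.univ R).card = R.card := by
  refine Finset.card_image_of_injective R fun t t' htt' => funext fun x => ?_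
  simpa [proj] using congrFun htt' x

lemma card_projR_eq_deg_empty (V : Finset A) (R : Finset (A → α)) :
    (projR V R).card = deg ∅ V R fun _ => none := by
  have hproj (t : A → α) : proj ∅ t = fun _ => none := by
    ext
    simp [proj]
  simp [deg, hproj]

lemma lpNorm_le_of_deg_le {U V : Finset A} {R : Finset (A → α)} {p : ℝ≥0∞} (hp : 0 < p) {d : ℕ}
    (hd : ∀ u ∈ projR U R, deg U V R u ≤ d) :
    lpNorm U V R p ≤ ((projR U R).card : ℝ) ^ (1 / p).toReal * d := by
  unfold lpNorm
  split_ifs with htop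
  · simpa [htop] using hd
  · have hp' : 0 < p.toReal := ENNReal.toReal_pos hp.ne' htop
    calc (∑ u ∈ projR U R, (deg U V R u : ℝ) ^ p.toReal) ^ (1 / p.toReal)
        ≤ (∑ _u ∈ projR U R, (d : ℝ) ^ p.toReal) ^ (1 / p.toReal) := by
          gcongr with u hu
          exact hd u hu
      _ = ((projR U R).card : ℝ) ^ (1 / p).toReal * d := by
          rw [Finset.sum_const, nsmul_eq_mul, Real.mul_rpow (by positivity) (by positivity),
            one_div, Real.rpow_rpow_inv (by positivity) hp'.ne', one_div, ENNReal.toReal_inv]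

end Degrees

section NormalRelation

variable {X ι : Type*} [DecidableEq X]

/-- The tuple built from `ω` in which attribute `x` carries the coordinates `ω i` with `x ∈ S i`;
the other coordinates are filled with `0`. -/
def normalTuple (S : ι → Finset X) (ω : ι → ℕ) : X → ι → ℕ :=
  fun x i => if x ∈ S i then ω i else 0

lemma proj_normalTuple_eq_iff {S : ι → Finset X} {U : Finset X} {ω ω' : ι → ℕ} :
    proj U (normalTuple S ω) = proj U (normalTuple S ω') ↔
      ∀ i, (U ∩ S i).Nonempty → ω i = ω' i := by
  refine ⟨fun heq i ⟨x, hx⟩ => ?_, fun heq => funext fun x => ?_⟩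
  · obtain ⟨hxU, hxS⟩ := Finset.mem_inter.1 hx
    have hx : normalTuple S ω x = normalTuple S ω' x := by
      simpa [proj, hxU] using congrFun heq x
    simpa [normalTuple, hxS] using congrFun hx i
  · by_cases hxU : x ∈ U
    · simp only [proj, hxU, if_true, Option.some_inj]
      funext i
      by_cases hxS : x ∈ S i
      · simpa [normalTuple, hxS] using heq i ⟨x, Finset.mem_inter.2 ⟨hxU, hxS⟩⟩
      · simp [normalTuple, hxS]
    · simp [proj, hxU]

variable [Fintype X] [Fintype ι] [DecidableEq ι]

/-- The normal relation with `N i` values for coordinate `i`: a uniformly random tuple of it has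
entropy `U ↦ ∑ i, log₂ (N i) * stepFn (S i) U`. -/
def normalRel (S : ι → Finset X) (N : ι → ℕ) : Finset (X → ι → ℕ) :=
  (Fintype.piFinset fun i => Finset.range (N i)).image (normalTuple S)

variable {S : ι → Finset X} {N : ι → ℕ}

lemma mem_normalRel {t : X → ι → ℕ} :
    t ∈ normalRel S N ↔ ∃ ω : ι → ℕ, (∀ i, ω i < N i) ∧ normalTuple S ω = t := by
  simp [normalRel]

lemma projR_filter_normalRel (U V : Finset X) {ω₀ : ι → ℕ} (hω₀ : ∀ i, ω₀ i < N i) :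
    projR V ((normalRel S N).filter fun t => proj U t = proj U (normalTuple S ω₀)) =
      (Fintype.piFinset fun i => if ¬(U ∩ S i).Nonempty ∧ (V ∩ S i).Nonempty
        then Finset.range (N i) else {ω₀ i}).image fun ω => proj V (normalTuple S ω) := by
  ext v
  simp only [projR, Finset.mem_image, Finset.mem_filter, mem_normalRel, Fintype.mem_piFinset]
  constructor
  · rintro ⟨_, ⟨⟨ω, hω, rfl⟩, hproj⟩, rfl⟩
    rw [proj_normalTuple_eq_iff] at hproj
    refine ⟨fun i => if (V ∩ S i).Nonempty then ω i else ω₀ i, fun i => ?_,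
      proj_normalTuple_eq_iff.2 fun i hi => if_pos hi⟩
    by_cases hU : (U ∩ S i).Nonempty
    · simp [hU, hproj i hU]
    · by_cases hV : (V ∩ S i).Nonempty <;> simp [hU, hV, hω i]
  · rintro ⟨ω, hω, rfl⟩
    refine ⟨_, ⟨⟨ω, fun i => ?_, rfl⟩, proj_normalTuple_eq_iff.2 fun i hi => ?_⟩, rfl⟩
    · have hωi := hω i
      split_ifs at hωi
      · exact Finset.mem_range.1 hωi
      · exact Finset.mem_singleton.1 hωi ▸ hω₀ i
    · simpa [hi] using hω i

lemma deg_normalRel (U V : Finset X) {u : X → Option (ι → ℕ)} (hu : u ∈ projR U (normalRel S N)) :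
    deg U V (normalRel S N) u = ∏ i with ¬(U ∩ S i).Nonempty ∧ (V ∩ S i).Nonempty, N i := by
  obtain ⟨_, ht, rfl⟩ := Finset.mem_image.1 hu
  obtain ⟨ω₀, hω₀, rfl⟩ := mem_normalRel.1 ht
  rw [deg, projR_filter_normalRel U V hω₀, Finset.card_image_of_injOn, Fintype.card_piFinset,
    Finset.prod_filter]
  · exact Finset.prod_congr rfl fun i _ => by split_ifs <;> simp
  · intro ω hω ω' hω' hproj
    rw [proj_normalTuple_eq_iff] at hproj
    funext i
    have hωi := Fintype.mem_piFinset.1 hω i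
    have hωi' := Fintype.mem_piFinset.1 hω' i
    split_ifs at hωi hωi' with hUV
    · exact hproj i hUV.2
    · exact (Finset.mem_singleton.1 hωi).trans (Finset.mem_singleton.1 hωi').symm

lemma card_projR_normalRel (hN : ∀ i, 0 < N i) (U : Finset X) :
    (projR U (normalRel S N)).card = ∏ i with (U ∩ S i).Nonempty, N i := by
  have hmem : (fun _ => none) ∈ projR ∅ (normalRel S N) :=
    Finset.mem_image.2 ⟨normalTuple S 0, mem_normalRel.2 ⟨0, hN, rfl⟩, by ext; simp [proj]⟩
  simp [card_projR_eq_deg_empty, deg_normalRel ∅ U hmem]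

end NormalRelation

section Rounding

lemma floor_two_rpow_pos {r : ℝ} (hr : 0 ≤ r) : 0 < ⌊(2 : ℝ) ^ r⌋₊ :=
  Nat.floor_pos.2 (Real.one_le_rpow one_le_two hr)

variable {ι : Type*} {c : ι → ℝ}

lemma prod_floor_two_rpow_le (I : Finset ι) (c : ι → ℝ) :
    ((∏ i ∈ I, ⌊(2 : ℝ) ^ c i⌋₊ : ℕ) : ℝ) ≤ 2 ^ ∑ i ∈ I, c i := by
  rw [Nat.cast_prod, Real.rpow_sum_of_pos two_pos]
  gcongr
  exact Nat.floor_le (by positivity)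

lemma two_rpow_sum_sub_card_le_prod_floor (hc : ∀ i, 0 ≤ c i) (I : Finset ι) :
    (2 : ℝ) ^ (∑ i ∈ I, c i - I.card) ≤ ((∏ i ∈ I, ⌊(2 : ℝ) ^ c i⌋₊ : ℕ) : ℝ) := by
  have hfloor (i : ι) : (2 : ℝ) ^ (c i - 1) ≤ ⌊(2 : ℝ) ^ c i⌋₊ := by
    have hone : (1 : ℝ) ≤ ⌊(2 : ℝ) ^ c i⌋₊ := by
      exact_mod_cast floor_two_rpow_pos (hc i)
    rw [Real.rpow_sub_one two_ne_zero]
    linarith [Nat.lt_floor_add_one ((2 : ℝ) ^ c i)]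
  calc (2 : ℝ) ^ (∑ i ∈ I, c i - I.card) = ∏ i ∈ I, (2 : ℝ) ^ (c i - 1) := by
        rw [← Real.rpow_sum_of_pos two_pos, Finset.sum_sub_distrib, Finset.sum_const,
          nsmul_eq_mul, mul_one]
    _ ≤ ∏ i ∈ I, (⌊(2 : ℝ) ^ c i⌋₊ : ℝ) := by
        gcongr with i
        exact hfloor i
    _ = _ := (Nat.cast_prod _ _).symm

end Rounding

section NormalModel

variable {X ι : Type*} [DecidableEq X] [Fintype ι] {S : ι → Finset X} {c : ι → ℝ}

lemma sum_smul_stepFn_apply (U : Finset X) :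
    (∑ i, c i • stepFn (S i)) U = ∑ i with (U ∩ S i).Nonempty, c i := by
  simp [stepFn, Finset.sum_filter]

lemma sum_smul_stepFn_union_sub (U V : Finset X) :
    (∑ i, c i • stepFn (S i)) (U ∪ V) - (∑ i, c i • stepFn (S i)) U =
      ∑ i with ¬(U ∩ S i).Nonempty ∧ (V ∩ S i).Nonempty, c i := by
  simp only [sum_smul_stepFn_apply, Finset.sum_filter, ← Finset.sum_sub_distrib,
    Finset.union_inter_distrib_right, Finset.union_nonempty]
  refine Finset.sum_congr rfl fun i _ => ?_
  by_cases hU : (U ∩ S i).Nonempty <;> simp [hU]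

variable [Fintype X] [DecidableEq ι]

lemma lpNorm_normalRel_le (hc : ∀ i, 0 ≤ c i) (U V : Finset X) {p : ℝ≥0∞} (hp : 0 < p) :
    lpNorm U V (normalRel S fun i => ⌊(2 : ℝ) ^ c i⌋₊) p ≤
      2 ^ statVal (∑ i, c i • stepFn (S i)) U V p := by
  refine (lpNorm_le_of_deg_le hp fun u hu => (deg_normalRel U V hu).le).trans ?_
  rw [card_projR_normalRel fun i => floor_two_rpow_pos (hc i), statVal,
    sum_smul_stepFn_union_sub, sum_smul_stepFn_apply, Real.rpow_add two_pos,
    mul_comm (1 / p).toReal, Real.rpow_mul zero_le_two]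
  gcongr <;> exact prod_floor_two_rpow_le _ c

lemma two_rpow_sub_card_le_card_normalRel (hc : ∀ i, 0 ≤ c i) :
    (2 : ℝ) ^ ((∑ i, c i • stepFn (S i)) Finset.univ - Fintype.card ι) ≤
      (normalRel S fun i => ⌊(2 : ℝ) ^ c i⌋₊).card := by
  rw [← card_projR_univ, card_projR_normalRel fun i => floor_two_rpow_pos (hc i),
    sum_smul_stepFn_apply]
  refine le_trans ?_ (two_rpow_sum_sub_card_le_prod_floor hc _)
  gcongr
  · exact one_le_two
  · exact Finset.card_le_univ _

end NormalModel

theorem exists_relation_of_mem_normal {X : Type*} [Fintype X] [DecidableEq X]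
    {h : Finset X → ℝ} (hh : h ∈ Normal X) :
    ∃ (γ : Type) (_ : DecidableEq γ) (R : Finset (X → γ)),
      (∀ (U V : Finset X) (p : ℝ≥0∞), 0 < p → lpNorm U V R p ≤ 2 ^ statVal h U V p) ∧
      (2 : ℝ) ^ (h Finset.univ - 2 ^ Fintype.card X) ≤ R.card := by
  obtain ⟨c, hc, rfl⟩ := hh
  -- Indexing the step functions by `Fin (2 ^ n)` rather than by `Finset X` keeps `γ` in `Type`.
  let e : Fin (Fintype.card (Finset X)) ≃ Finset X := (Fintype.equivFin _).symm
  rw [← e.sum_comp fun W => c W • stepFn W]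
  refine ⟨_, inferInstance, normalRel e fun i => ⌊(2 : ℝ) ^ c (e i)⌋₊, fun U V p hp => ?_, ?_⟩
  · exact lpNorm_normalRel_le (fun i => hc (e i)) U V hp
  · simpa using two_rpow_sub_card_le_card_normalRel (S := e) fun i => hc (e i)

lemma finite_query_output {X κ γ : Type*} [Finite X] {Y : κ → Finset X}
    (hcover : ∀ x, ∃ k, x ∈ Y k) (D : κ → Finset (X → γ)) :
    {t : X → γ | ∀ k, ∃ t' ∈ D k, ∀ x ∈ Y k, t x = t' x}.Finite := by
  choose k hk using hcover
  have hvalues (x : X) : ((fun t => t x) '' (D (k x) : Set (X → γ))).Finite :=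
    (D (k x)).finite_toSet.image _
  refine (Set.Finite.pi' hvalues).subset fun t ht x => ?_
  obtain ⟨t', ht', heq⟩ := ht (k x)
  exact ⟨t', ht', (heq x (hk x)).symm⟩

theorem simple_polymatroid_bound_tight_general {X : Type*} [Fintype X] [DecidableEq X]
    {m : ℕ} {Y : Fin m → Finset X} (hcover : ∀ x : X, ∃ k, x ∈ Y k)
    {s : ℕ} {U V : Fin s → Finset X} {p : Fin s → ℝ≥0∞} (hp : ∀ i, 0 < p i)
    (hsimple : ∀ i, (U i).card ≤ 1) {b : Fin s → ℝ}
    {L : ℝ} (hL : LogUBound (Gamma X) s U V p b = (L : EReal)) :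
    ∃ (γ : Type) (_ : DecidableEq γ) (D : Fin m → Finset (X → γ)) (Q : Finset (X → γ)),
      (∀ i k, lpNorm (U i) (V i) (D k) (p i) ≤ 2 ^ (b i)) ∧
      (∀ t, t ∈ Q ↔ ∀ k : Fin m, ∃ t' ∈ D k, ∀ x ∈ Y k, t x = t' x) ∧
      (2 : ℝ) ^ (L - 2 ^ (Fintype.card X)) ≤ (Q.card : ℝ) := by
  rw [logUBound_gamma_eq_normal hsimple] at hL
  obtain ⟨h, hh, hstat, hLh⟩ := exists_normal_of_logUBound_eq hL
  obtain ⟨γ, _, R, hnorm, hcard⟩ := exists_relation_of_mem_normal hh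
  obtain ⟨Q, hQ⟩ := (finite_query_output hcover fun _ => R).exists_finset
  have hRQ : R ⊆ Q := fun t ht => (hQ t).2 fun _ => ⟨t, ht, fun _ _ => rfl⟩
  refine ⟨γ, inferInstance, fun _ => R, Q, fun i _ => ?_, hQ, ?_⟩
  · exact (hnorm _ _ _ (hp i)).trans (Real.rpow_le_rpow_of_exponent_le one_le_two (hstat i))
  · calc (2 : ℝ) ^ (L - 2 ^ Fintype.card X) ≤ 2 ^ (h Finset.univ - 2 ^ Fintype.card X) := by
          gcongr
          exact one_le_two
      _ ≤ R.card := hcard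
      _ ≤ Q.card := by exact_mod_cast Finset.card_le_card hRQ

/-- **tightness for simple statistics.** If all statistics are simple and are
guarded by atoms of a full conjunctive query `Q`, and the polymatroid bound
`L = Log-U-Bound_{Γ_n}(Σ, b)` is finite, then there is a worst-case database instance `D`
satisfying the concrete statistics `‖deg_{D (j i)}(V i|U i)‖_{p i} ≤ 2^{b i}` with
`|Q(D)| ≥ 2^{L - 2^n}`, where `n = |X|`. -/
theorem simple_polymatroid_bound_tight {X : Type*} [Fintype X] [DecidableEq X]
    (m : ℕ) (Y : Fin m → Finset X) (hcover : ∀ x : X, ∃ j, x ∈ Y j)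
    (s : ℕ) (U V : Fin s → Finset X) (p : Fin s → ℝ≥0∞) (hp : ∀ i, 0 < p i)
    (hsimple : ∀ i, (U i).card ≤ 1)
    (j : Fin s → Fin m) (hguard : ∀ i, U i ∪ V i ⊆ Y (j i))
    (b : Fin s → ℝ) (hb : ∀ i, 0 < b i)
    (L : ℝ) (hL : LogUBound (Gamma X) s U V p b = (L : EReal)) :
    ∃ (γ : Type) (_ : DecidableEq γ) (D : Fin m → Finset (X → γ)) (Q : Finset (X → γ)),
      (∀ i, lpNorm (U i) (V i) (D (j i)) (p i) ≤ 2 ^ (b i)) ∧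
      (∀ t, t ∈ Q ↔ ∀ k : Fin m, ∃ t' ∈ D k, ∀ x ∈ Y k, t x = t' x) ∧
      (2 : ℝ) ^ (L - 2 ^ (Fintype.card X)) ≤ (Q.card : ℝ) := by
  obtain ⟨γ, hγ, D, Q, hD, hQ⟩ := simple_polymatroid_bound_tight_general hcover hp hsimple hL
  exact ⟨γ, hγ, D, Q, fun i => hD i (j i), hQ⟩

end

end JoinBounds
end
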